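/- arXiv:2304.08473 — 2 statements merged into one kernel-verified Lean document; each statement's English description precedes it below -/
import Mathlib

section
/- Let R be a finite commutative principal ideal ring, A an r×n matrix over R whose rows are linearly independent, and y ∈ R^n. Then y belongs to the row span of A if and only if every (r+1)×(r+1) minor of the (r+1)×n matrix obtained by stacking y on top of A vanishes. -/
/-- Stacked minor, expanded along the first row. -/
theorem aux_expand {R : Type*} [CommRing R] {r n : ℕ} (A : Matrix (Fin r) (Fin n) R)
    (y : Fin n → R) (g : Fin (r + 1) → Fin n) :
    ((Matrix.of (Fin.cons y A)).submatrix id g).det =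
      ∑ j : Fin (r + 1), (-1) ^ (j : ℕ) * y (g j) * (A.submatrix id (g ∘ j.succAbove)).det := by
  rw [Matrix.det_succ_row_zero]
  rfl

theorem aux_forward {R : Type*} [CommRing R] {r n : ℕ} (A : Matrix (Fin r) (Fin n) R)
    (y : Fin n → R) (hy : y ∈ Submodule.span R (Set.range A)) (g : Fin (r + 1) → Fin n) :
    ((Matrix.of (Fin.cons y A)).submatrix id g).det = 0 := by
  induction hy using Submodule.span_induction with
  | mem x hx =>
    obtain ⟨i, rfl⟩ := hx
    refine Matrix.det_zero_of_row_eq (i := 0) (j := i.succ) (Fin.succ_ne_zero i).symm ?_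
    ext j
    rfl
  | zero => rw [aux_expand]; simp
  | add x z _ _ hx hz =>
    rw [aux_expand] at hx hz ⊢
    rw [← add_zero (0 : R)]
    nth_rw 1 [← hx]
    rw [← hz, ← Finset.sum_add_distrib]
    refine Finset.sum_congr rfl fun j _ => ?_
    simp only [Pi.add_apply]; ring
  | smul a x _ hx =>
    rw [aux_expand] at hx ⊢
    rw [← mul_zero a, ← hx, Finset.mul_sum]
    refine Finset.sum_congr rfl fun j _ => ?_
    simp only [Pi.smul_apply, smul_eq_mul]; ring

/-- vanishing of sorted minors gives vanishing of all minors -/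
theorem aux_sort {R : Type*} [CommRing R] {r n : ℕ} (B : Matrix (Fin r) (Fin n) R)
    (h : ∀ g : Fin r → Fin n, StrictMono g → (B.submatrix id g).det = 0)
    (g : Fin r → Fin n) : (B.submatrix id g).det = 0 := by
  by_cases hg : Function.Injective g
  · have h1 := h (g ∘ Tuple.sort g)
      ((Tuple.monotone_sort g).strictMono_of_injective (hg.comp (Tuple.sort g).injective))
    have h2 := Matrix.det_permute' (Tuple.sort g) (B.submatrix id g)
    rw [Matrix.submatrix_submatrix] at h2
    change (B.submatrix id (g ∘ Tuple.sort g)).det = _ at h2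
    rw [h1] at h2
    rcases Int.units_eq_one_or (Equiv.Perm.sign (Tuple.sort g)) with h3 | h3 <;>
      simpa [h3] using h2.symm
  · simp only [Function.Injective, not_forall] at hg
    obtain ⟨a, b, hab, hne⟩ := hg
    exact Matrix.det_zero_of_column_eq hne (fun k => by simp [hab])

theorem aux_minor_smul {R : Type*} [CommRing R] {r n : ℕ} (A : Matrix (Fin r) (Fin n) R)
    (y : Fin n → R)
    (h : ∀ g : Fin (r + 1) → Fin n, ((Matrix.of (Fin.cons y A)).submatrix id g).det = 0)
    (g : Fin r → Fin n) :
    (A.submatrix id g).det • y ∈ Submodule.span R (Set.range A) := by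
  set B : Matrix (Fin (r + 1)) (Fin n) R := Matrix.of (Fin.cons y A) with hB
  have key : (A.submatrix id g).det • y =
      ∑ i : Fin r, (-((-1) ^ ((i.succ : Fin (r + 1)) : ℕ) *
        (B.submatrix i.succ.succAbove g).det)) • A i := by
    ext j
    have h1 := h (Fin.cons j g)
    rw [Matrix.det_succ_column_zero, Fin.sum_univ_succ] at h1
    have h2 : ∀ i : Fin (r + 1), (B.submatrix id (Fin.cons j g)).submatrix i.succAbove Fin.succ
        = B.submatrix i.succAbove g := fun i => rfl
    simp only [h2] at h1
    have h3 : B.submatrix (Fin.succAbove 0) g = A.submatrix id g := by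
      ext a b; rfl
    rw [h3] at h1
    simp only [Matrix.submatrix_apply, id, Fin.cons_zero] at h1
    have h4 : B 0 j = y j := rfl
    have h5 : ∀ i : Fin r, B i.succ j = A i j := fun i => rfl
    simp only [h4, h5] at h1
    simp only [Finset.sum_apply, Pi.smul_apply, smul_eq_mul]
    rw [eq_comm, ← sub_eq_zero, ← neg_eq_zero, ← h1]
    simp only [neg_mul, Finset.sum_neg_distrib]
    simp only [Fin.val_zero, pow_zero, one_mul]
    have h6 : ∀ i : Fin r, (-1 : R) ^ ((i.succ : Fin (r + 1)) : ℕ) * A i j *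
        (B.submatrix i.succ.succAbove g).det = (-1) ^ ((i.succ : Fin (r + 1)) : ℕ) *
        (B.submatrix i.succ.succAbove g).det * A i j := fun i => by ring
    simp only [h6]
    ring
  rw [key]
  exact Submodule.sum_mem _ fun i _ =>
    Submodule.smul_mem _ _ (Submodule.subset_span ⟨i, rfl⟩)

theorem aux_field {K : Type*} [Field K] {r n : ℕ} (A : Matrix (Fin r) (Fin n) K)
    (hA : LinearIndependent K A.row) : ∃ g : Fin r → Fin n, (A.submatrix id g).det ≠ 0 := by
  have h1 : Module.finrank K (Submodule.span K (Set.range A.col)) = r := by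
    rw [← Matrix.rank_eq_finrank_span_cols, hA.rank_matrix, Fintype.card_fin]
  obtain ⟨f, hf, -, hli⟩ := Submodule.exists_fun_fin_finrank_span_eq K (Set.range A.col)
  choose g hg using hf
  have hli' := hli.comp (finCongr h1.symm) (finCongr h1.symm).injective
  refine ⟨g ∘ finCongr h1.symm, ?_⟩
  have h2 : (A.submatrix id (g ∘ finCongr h1.symm)).col = f ∘ finCongr h1.symm := by
    ext a b
    rw [Function.comp_apply, ← hg]
    rfl
  rw [← h2, Matrix.linearIndependent_cols_iff_isUnit, Matrix.isUnit_iff_isUnit_det] at hli'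
  exact hli'.ne_zero

theorem aux_max {R : Type*} [CommRing R] [Finite R] {r n : ℕ} (A : Matrix (Fin r) (Fin n) R)
    (hA : LinearIndependent R A) (m : Ideal R) [hm : m.IsMaximal] :
    ∃ g : Fin r → Fin n, (A.submatrix id g).det ∉ m := by
  have hass : m ∈ associatedPrimes R R :=
    Module.associatedPrimes.minimalPrimes_annihilator_subset_associatedPrimes R R
      (IsArtinianRing.mem_minimalPrimes (by
        intro x hx
        have := Module.mem_annihilator.1 hx 1
        simp only [smul_eq_mul, mul_one] at this
        simp [this]))
  obtain ⟨-, s, hs⟩ := isAssociatedPrime_iff.1 hass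
  have hs' : ∀ x, x ∈ m ↔ x * s = 0 := by
    intro x
    rw [hs, Submodule.mem_colon_singleton]
    rfl
  letI := Ideal.Quotient.field m
  obtain ⟨g, hg⟩ := aux_field (A.map (Ideal.Quotient.mk m)) (by
    rw [Fintype.linearIndependent_iff]
    intro c hc
    choose v hv using fun i => Ideal.Quotient.mk_surjective (I := m) (c i)
    have h0 : ∑ i, (v i * s) • A i = 0 := by
      ext j
      have := congrFun hc j
      simp only [Finset.sum_apply, Pi.smul_apply, smul_eq_mul, Matrix.row_apply,
        Matrix.map_apply, ← hv, ← map_mul, ← map_sum, Pi.zero_apply] at this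
      rw [Ideal.Quotient.eq_zero_iff_mem, hs', Finset.sum_mul] at this
      simp only [Finset.sum_apply, Pi.smul_apply, smul_eq_mul, Pi.zero_apply]
      rw [← this]
      exact Finset.sum_congr rfl fun i _ => by ring
    intro i
    rw [← hv, Ideal.Quotient.eq_zero_iff_mem, hs']
    exact Fintype.linearIndependent_iff.1 hA _ h0 i)
  refine ⟨g, fun h => hg ?_⟩
  rw [← Ideal.Quotient.eq_zero_iff_mem, RingHom.map_det] at h
  exact h

/-- Over a finite commutative principal ideal ring, if the rows of `A` are
linearly independent, then `y` lies in the row span of `A` iff all `(r+1)×(r+1)` minors of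
the matrix obtained by stacking `y` on top of `A` vanish. -/
theorem stmt10 (R : Type*) [CommRing R] [Fintype R] [IsPrincipalIdealRing R]
    (r n : ℕ) (A : Matrix (Fin r) (Fin n) R) (hA : LinearIndependent R A)
    (y : Fin n → R) :
    y ∈ Submodule.span R (Set.range A) ↔
      ∀ g : Fin (r + 1) → Fin n, StrictMono g →
        ((Matrix.of (Fin.cons y A)).submatrix id g).det = 0 := by
  refine ⟨fun hy g _ => aux_forward A y hy g, fun h => ?_⟩
  have h' := aux_minor_smul A y (aux_sort _ h)
  let I : Ideal R := (Submodule.span R (Set.range A)).comap (LinearMap.toSpanSingleton R _ y)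
  have hI : I = ⊤ := by
    by_contra hne
    obtain ⟨m, hm, hle⟩ := Ideal.exists_le_maximal I hne
    obtain ⟨g, hg⟩ := aux_max A hA m
    exact hg (hle (h' g))
  have h1 : (1 : R) ∈ I := hI ▸ Submodule.mem_top
  have h2 : (1 : R) • y ∈ Submodule.span R (Set.range A) := h1
  rwa [one_smul] at h2
end

section
/- Let R be a finite commutative principal ideal ring, M_0, M_1, …, M_k ∈ R^{m×n}, x_1, …, x_k ∈ R, and set M_x = M_0 + Σ x_i M_i. Then rk(M_x) ≤ r if and only if there exists Z ∈ R^{n×(n−r)} with linearly independent columns such that M_x · Z = 0. -/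
open Matrix in
/-- Finite commutative rings have stable range one. -/
theorem ks_stable (R : Type*) [CommRing R] [Finite R] (a s b : R) (h : a * s + b = 1) :
    ∃ f : R, IsUnit (a + f * b) := by
  obtain ⟨i, j, hij, he⟩ := Finite.exists_ne_map_eq_of_infinite (fun k : ℕ => a ^ k)
  wlog hlt : i < j generalizing i j
  · exact this j i hij.symm he.symm (by omega)
  refine ⟨1 - a ^ (j - i), ?_⟩
  have h0 : a ^ i * (1 - a ^ (j - i)) = 0 := by
    rw [mul_sub, ← pow_add, Nat.add_sub_cancel' hlt.le, mul_one]
    exact sub_eq_zero.2 he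
  by_contra hu
  obtain ⟨m, hm, hmem⟩ := exists_max_ideal_of_mem_nonunits hu
  have hp := hm.isPrime
  by_cases ha : a ∈ m
  · have h1 : a ^ (j - i) ∈ m := Ideal.pow_mem_of_mem m ha _ (by omega)
    apply hp.ne_top
    rw [Ideal.eq_top_iff_one]
    have h2 : (1 : R) = (a + (1 - a ^ (j - i)) * b) + a * (s - 1) + a ^ (j - i) * b := by
      rw [← h]; simp only [h]; linear_combination -h
    rw [h2]
    exact add_mem (add_mem hmem (m.mul_mem_right _ ha)) (m.mul_mem_right _ h1)
  · have h1 : a ^ i * (1 - a ^ (j - i)) ∈ m := by rw [h0]; exact m.zero_mem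
    rcases hp.mem_or_mem h1 with h2 | h2
    · exact ha (hp.mem_of_pow_mem _ h2)
    · exact ha ((Submodule.add_mem_iff_left m (m.mul_mem_right _ h2)).1 hmem)

open Matrix in
/-- Hermite reduction of a single vector. -/
theorem ks_hermite (R : Type*) [CommRing R] [Finite R] [IsPrincipalIdealRing R] (k : ℕ)
    (v : Fin (k + 1) → R) :
    ∃ (P P' : Matrix (Fin (k + 1)) (Fin (k + 1)) R) (d : R),
      P * P' = 1 ∧ P' * P = 1 ∧ P *ᵥ v = Pi.single 0 d := by
  obtain ⟨d, hd⟩ := (IsPrincipalIdealRing.principal (Ideal.span (Set.range v))).principal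
  have hv : ∀ i, ∃ a, v i = d * a := by
    intro i
    have : v i ∈ Ideal.span (Set.range v) := Ideal.subset_span ⟨i, rfl⟩
    rw [hd] at this
    obtain ⟨a, ha⟩ := Submodule.mem_span_singleton.1 this
    exact ⟨a, by rw [← ha, smul_eq_mul, mul_comm]⟩
  choose a ha using hv
  have hd' : d ∈ Ideal.span (Set.range v) := by
    rw [hd]; exact Submodule.mem_span_singleton_self d
  obtain ⟨s, hs⟩ := (Submodule.mem_span_range_iff_exists_fun R).1 hd'
  simp only [smul_eq_mul] at hs
  have hc : d * (1 - ∑ i, s i * a i) = 0 := by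
    have : ∑ i, s i * v i = d * ∑ i, s i * a i := by
      rw [Finset.mul_sum]
      exact Finset.sum_congr rfl fun i _ => by rw [ha]; ring
    rw [mul_sub, ← this, hs]; ring
  set c := 1 - ∑ i, s i * a i with hcdef
  rw [Fin.sum_univ_succ] at hcdef
  obtain ⟨f, hf⟩ := ks_stable R (a 0) (s 0) (∑ i : Fin k, s i.succ * a i.succ + c)
    (by rw [hcdef]; ring)
  obtain ⟨u, hu⟩ := hf
  let y : Fin (k + 1) → R := Fin.cons 0 fun i => f * s i.succ
  let t : Fin (k + 1) → R := Fin.cons 0 fun i => a i.succ * (↑u⁻¹ : R)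
  let e : Fin (k + 1) → R := Pi.single 0 1
  have hye : y ⬝ᵥ e = 0 := by simp [y, e]
  have het : e ⬝ᵥ t = 0 := by simp [t, e]
  have hY : vecMulVec e y * vecMulVec e y = 0 := by
    rw [vecMulVec_mul_vecMulVec, hye]; simp
  have hT : vecMulVec t e * vecMulVec t e = 0 := by
    rw [vecMulVec_mul_vecMulVec, het]; simp
  have hY1 : (1 + vecMulVec e y) * (1 - vecMulVec e y) = 1 := by
    noncomm_ring; simp [hY]
  have hY2 : (1 - vecMulVec e y) * (1 + vecMulVec e y) = 1 := by
    noncomm_ring; simp [hY]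
  have hT1 : (1 + vecMulVec t e) * (1 - vecMulVec t e) = 1 := by
    noncomm_ring; simp [hT]
  have hT2 : (1 - vecMulVec t e) * (1 + vecMulVec t e) = 1 := by
    noncomm_ring; simp [hT]
  have hyv : v 0 + y ⬝ᵥ v = d * u := by
    have : y ⬝ᵥ v = d * (f * ∑ i : Fin k, s i.succ * a i.succ) := by
      simp only [dotProduct, Fin.sum_univ_succ, y, Fin.cons_zero, Fin.cons_succ, zero_mul, zero_add,
        Finset.mul_sum]
      exact Finset.sum_congr rfl fun i _ => by rw [ha]; ring
    rw [this, hu, ha 0]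
    linear_combination -f * hc
  refine ⟨(1 - vecMulVec t e) * (1 + vecMulVec e y), (1 - vecMulVec e y) * (1 + vecMulVec t e),
    d * u, ?_, ?_, ?_⟩
  · rw [mul_assoc, ← mul_assoc (1 + vecMulVec e y), hY1, one_mul, hT2]
  · rw [mul_assoc, ← mul_assoc (1 + vecMulVec t e), hT1, one_mul, hY2]
  · rw [← mulVec_mulVec]
    have h1 : (1 + vecMulVec e y) *ᵥ v = v + (y ⬝ᵥ v) • e := by
      rw [add_mulVec, one_mulVec, vecMulVec_mulVec]; simp
    have h2 : ∀ w, (1 - vecMulVec t e) *ᵥ w = w - w 0 • t := by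
      intro w
      rw [sub_mulVec, one_mulVec, vecMulVec_mulVec]; simp [e]
    rw [h1, h2]
    have h3 : (v + (y ⬝ᵥ v) • e) 0 = d * u := by simp [e, hyv]
    rw [h3]
    ext i
    refine Fin.cases ?_ (fun i => ?_) i
    · simp [e, t, hyv]
    · simp [e, t, ha i.succ]
      have : (u : R) * (↑u⁻¹ : R) = 1 := u.mul_inv
      linear_combination (-d * a i.succ) * this

open Matrix in
/-- `r` equations in `s + r` unknowns have `s` independent solutions. -/
theorem ks_forward (R : Type*) [CommRing R] [Finite R] [IsPrincipalIdealRing R] (s r : ℕ)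
    (V : Fin r → Fin (s + r) → R) :
    ∃ z : Fin s → Fin (s + r) → R, LinearIndependent R z ∧ ∀ i j, V i ⬝ᵥ z j = 0 := by
  induction r with
  | zero =>
    exact ⟨Pi.basisFun R (Fin s), (Pi.basisFun R (Fin s)).linearIndependent, fun i => i.elim0⟩
  | succ r ih =>
    obtain ⟨P, P', d, h1, h2, h3⟩ := ks_hermite R (s + r) (V 0)
    obtain ⟨z, hz, hV⟩ := ih fun i => Fin.tail (P *ᵥ V i.succ)
    have key : ∀ w j, w ⬝ᵥ ((Fin.cons 0 (z j) : Fin (s + r + 1) → R) ᵥ* P)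
        = Fin.tail (P *ᵥ w) ⬝ᵥ z j := by
      intro w j
      rw [dotProduct_comm, ← dotProduct_mulVec, dotProduct_comm]
      simp [dotProduct, Fin.sum_univ_succ, Fin.tail]
    refine ⟨fun j => (Fin.cons 0 (z j) : Fin (s + r + 1) → R) ᵥ* P, ?_, ?_⟩
    · rw [Fintype.linearIndependent_iff] at hz ⊢
      intro g hg
      apply hz
      have h4 : (∑ j, g j • (Fin.cons 0 (z j) : Fin (s + r + 1) → R)) ᵥ* P = 0 := by
        rw [Matrix.sum_vecMul, ← hg]
        exact Finset.sum_congr rfl fun i _ => by rw [smul_vecMul]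
      have h5 : (∑ j, g j • (Fin.cons 0 (z j) : Fin (s + r + 1) → R)) = 0 := by
        have := congrArg (fun w => w ᵥ* P') h4
        simpa [vecMul_vecMul, h1] using this
      ext i
      have := congrFun h5 i.succ
      simpa using this
    · intro i j
      rw [key]
      refine Fin.cases ?_ (fun i => ?_) i
      · rw [h3]
        simp [dotProduct, Fin.tail]
      · exact hV i j

open Matrix in
/-- The vectors orthogonal to `s` independent vectors in `R^(t+s)` lie in the range of a
linear map from `R^t`. -/
theorem ks_backward (R : Type*) [CommRing R] [Finite R] [IsPrincipalIdealRing R] (t s : ℕ)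
    (z : Fin s → Fin (t + s) → R) (hz : LinearIndependent R z) :
    ∃ g : (Fin t → R) →ₗ[R] (Fin (t + s) → R), ∀ w, (∀ j, w ⬝ᵥ z j = 0) → ∃ u, g u = w := by
  induction s with
  | zero => exact ⟨LinearMap.id, fun w _ => ⟨w, rfl⟩⟩
  | succ s ih =>
    obtain ⟨P, P', d, h1, h2, h3⟩ := ks_hermite R (t + s) (z 0)
    have hy : LinearIndependent R fun j => P *ᵥ z j := by
      rw [Fintype.linearIndependent_iff] at hz ⊢
      intro g hg
      apply hz
      have h4 : P *ᵥ (∑ j, g j • z j) = 0 := by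
        rw [Matrix.mulVec_sum, ← hg]
        exact Finset.sum_congr rfl fun i _ => by rw [mulVec_smul]
      have := congrArg (fun w => P' *ᵥ w) h4
      simpa [mulVec_mulVec, h2] using this
    rw [Fintype.linearIndependent_iff] at hy
    have hd : IsUnit d := by
      rw [isUnit_iff_mem_nonZeroDivisors_of_finite, mem_nonZeroDivisors_iff_right]
      intro c hc
      have := hy (Pi.single 0 c) (by
        simp only [Fin.sum_univ_succ, h3]
        simp [← Pi.single_smul, hc]) 0
      simpa using this
    obtain ⟨d, rfl⟩ := hd
    obtain ⟨g, hg⟩ := ih (fun j => Fin.tail (P *ᵥ z j.succ)) (by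
      rw [Fintype.linearIndependent_iff]
      intro c hc j
      have := hy (Fin.cons (-((∑ j, c j * (P *ᵥ z j.succ) 0) * (↑d⁻¹ : R))) c) (by
        rw [Fin.sum_univ_succ]
        simp only [h3, Fin.cons_zero, Fin.cons_succ]
        ext i
        refine Fin.cases ?_ (fun i => ?_) i
        · simp
        · have := congrFun hc i
          simpa [Fin.tail] using this) j.succ
      simpa using this)
    let cons0 : (Fin (t + s) → R) →ₗ[R] (Fin (t + s + 1) → R) :=
      { toFun := fun x => Fin.cons 0 x
        map_add' := fun x y => by
          ext i; refine Fin.cases ?_ (fun i => ?_) i <;> simp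
        map_smul' := fun x y => by
          ext i; refine Fin.cases ?_ (fun i => ?_) i <;> simp }
    refine ⟨(Matrix.vecMulLinear P).comp (cons0.comp g), fun w hw => ?_⟩
    have hw' : ∀ j, (w ᵥ* P') ⬝ᵥ (P *ᵥ z j) = 0 := by
      intro j
      rw [dotProduct_mulVec, vecMul_vecMul, h2, vecMul_one, hw]
    have h0 : (w ᵥ* P') 0 = 0 := by
      have := hw' 0
      rw [h3, dotProduct_single] at this
      simpa using this
    obtain ⟨u, hu⟩ := hg (Fin.tail (w ᵥ* P')) (by
      intro j
      have := hw' j.succ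
      rw [dotProduct, Fin.sum_univ_succ, h0, zero_mul, zero_add] at this
      exact this)
    refine ⟨u, ?_⟩
    have h4 : cons0 (g u) = w ᵥ* P' := by
      rw [hu]
      change (Fin.cons 0 (Fin.tail (w ᵥ* P')) : Fin (t + s + 1) → R) = _
      rw [← h0, Fin.cons_self_tail]
    change (cons0 (g u)) ᵥ* P = w
    rw [h4, vecMul_vecMul, h2, vecMul_one]

/-- Submodules of `R^n` are generated by `n` elements. -/
theorem ks_gen (R : Type*) [CommRing R] [IsPrincipalIdealRing R] (n : ℕ)
    (N : Submodule R (Fin n → R)) :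
    ∃ v : Fin n → Fin n → R, Submodule.span R (Set.range v) = N := by
  induction n with
  | zero => exact ⟨fun i => i.elim0, Subsingleton.elim _ _⟩
  | succ n ih =>
    let cons0 : (Fin n → R) →ₗ[R] (Fin (n + 1) → R) :=
      { toFun := fun x => Fin.cons 0 x
        map_add' := fun x y => by
          ext i; refine Fin.cases ?_ (fun i => ?_) i <;> simp
        map_smul' := fun x y => by
          ext i; refine Fin.cases ?_ (fun i => ?_) i <;> simp }
    obtain ⟨v, hv⟩ := ih (N.comap cons0)
    obtain ⟨d, hd⟩ := (IsPrincipalIdealRing.principal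
      (N.map (LinearMap.proj (R := R) (φ := fun _ : Fin (n + 1) => R) 0))).principal
    have hd' : d ∈ N.map (LinearMap.proj (R := R) (φ := fun _ : Fin (n + 1) => R) 0) := by
      rw [hd]; exact Submodule.mem_span_singleton_self d
    obtain ⟨w, hwN, hw⟩ := hd'
    refine ⟨Fin.cons w fun i => cons0 (v i), le_antisymm ?_ ?_⟩
    · rw [Submodule.span_le]
      rintro _ ⟨i, rfl⟩
      refine Fin.cases ?_ (fun i => ?_) i
      · exact hwN
      · have : v i ∈ N.comap cons0 := by
          rw [← hv]; exact Submodule.subset_span ⟨i, rfl⟩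
        exact this
    · intro x hx
      have hx0 : x 0 ∈ N.map (LinearMap.proj (R := R) (φ := fun _ : Fin (n + 1) => R) 0) :=
        ⟨x, hx, rfl⟩
      rw [hd] at hx0
      obtain ⟨c, hc⟩ := Submodule.mem_span_singleton.1 hx0
      have hw0 : w 0 = d := hw
      have h1 : cons0 (Fin.tail (x - c • w)) = x - c • w := by
        change (Fin.cons 0 (Fin.tail (x - c • w)) : Fin (n + 1) → R) = _
        have : (x - c • w) 0 = 0 := by
          simp only [Pi.sub_apply, Pi.smul_apply, hw0, hc, sub_self]
        rw [← this, Fin.cons_self_tail]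
      have h2 : Fin.tail (x - c • w) ∈ N.comap cons0 := by
        rw [Submodule.mem_comap, h1]
        exact N.sub_mem hx (N.smul_mem c hwN)
      rw [← hv] at h2
      have h3 := Submodule.mem_map_of_mem (f := cons0) h2
      rw [Submodule.map_span, h1] at h3
      have h4 : x = c • w + (x - c • w) := by abel
      rw [h4]
      refine add_mem (Submodule.smul_mem _ _ (Submodule.subset_span ⟨0, rfl⟩)) ?_
      refine Submodule.span_mono ?_ h3
      rintro _ ⟨_, ⟨i, rfl⟩, rfl⟩
      exact ⟨i.succ, rfl⟩

open Matrix in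
theorem ks_main (R : Type*) [CommRing R] [Finite R] [IsPrincipalIdealRing R]
    (m n r : ℕ) (A : Matrix (Fin m) (Fin n) R) :
    (∃ v : Fin r → (Fin n → R),
        Submodule.span R (Set.range v) = Submodule.span R (Set.range A)) ↔
    (∃ Z : Matrix (Fin n) (Fin (n - r)) R, LinearIndependent R Z.transpose ∧ A * Z = 0) := by
  rcases le_total n r with hnr | hnr
  · constructor
    · intro _
      have : IsEmpty (Fin (n - r)) := by
        rw [Nat.sub_eq_zero_of_le hnr]; infer_instance
      exact ⟨0, linearIndependent_empty_type, by ext i j; exact this.elim j⟩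
    · intro _
      obtain ⟨v, hv⟩ := ks_gen R n (Submodule.span R (Set.range A))
      refine ⟨fun i => if h : i.1 < n then v ⟨i, h⟩ else 0, ?_⟩
      rw [← hv]
      apply le_antisymm
      · rw [Submodule.span_le]
        rintro _ ⟨i, rfl⟩
        by_cases h : i.1 < n
        · simp only [h, dif_pos]
          exact Submodule.subset_span ⟨_, rfl⟩
        · simp [h]
      · apply Submodule.span_mono
        rintro _ ⟨i, rfl⟩
        exact ⟨⟨i, by omega⟩, by simp⟩
  · generalize hs : n - r = s
    constructor
    · rintro ⟨v, hv⟩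
      obtain rfl : n = s + r := by omega
      obtain ⟨z, hz, hV⟩ := ks_forward R s r v
      refine ⟨Matrix.transpose z, hz, ?_⟩
      ext i j
      have hA : A i ∈ Submodule.span R (Set.range v) := by
        rw [hv]; exact Submodule.subset_span ⟨i, rfl⟩
      change A i ⬝ᵥ z j = 0
      generalize A i = b at hA ⊢
      induction hA using Submodule.span_induction with
      | mem x hx => obtain ⟨i, rfl⟩ := hx; exact hV i j
      | zero => simp
      | add x y _ _ hx hy => rw [add_dotProduct, hx, hy, add_zero]
      | smul c x _ hx => rw [smul_dotProduct, hx, smul_zero]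
    · rintro ⟨Z, hZ, hAZ⟩
      obtain rfl : n = r + s := by omega
      obtain ⟨g, hg⟩ := ks_backward R r s Z.transpose hZ
      obtain ⟨v, hv⟩ := ks_gen R r ((Submodule.span R (Set.range A)).comap g)
      refine ⟨fun i => g (v i), ?_⟩
      have h1 : Submodule.span R (Set.range A) ≤ LinearMap.range g := by
        rw [Submodule.span_le]
        rintro _ ⟨i, rfl⟩
        exact hg (A i) fun j => congrFun (congrFun hAZ i) j
      rw [← Submodule.map_comap_eq_of_le h1, ← hv, Submodule.map_span, ← Set.range_comp]
      rfl


/-- Kipnis–Shamir modeling: Over a finite commutative principal ideal ring,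
`rk(M_x) ≤ r` iff there is `Z ∈ R^{n×(n-r)}` with linearly independent columns such that
`M_x · Z = 0`, where `M_x = M_0 + ∑ x_i M_i`. -/
theorem stmt16 (R : Type*) [CommRing R] [Fintype R] [IsPrincipalIdealRing R]
    (m n k r : ℕ) (M₀ : Matrix (Fin m) (Fin n) R)
    (M : Fin k → Matrix (Fin m) (Fin n) R) (x : Fin k → R) :
    (∃ v : Fin r → (Fin n → R),
        Submodule.span R (Set.range v) =
          Submodule.span R (Set.range (M₀ + ∑ i : Fin k, x i • M i))) ↔
    (∃ Z : Matrix (Fin n) (Fin (n - r)) R,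
        LinearIndependent R Z.transpose ∧ (M₀ + ∑ i : Fin k, x i • M i) * Z = 0) := by
  exact ks_main R m n r _
end
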